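/- arXiv:2510.25900 — 2 statements merged into one kernel-verified Lean document; each statement's English description precedes it below -/
import Mathlib

section
/- Let m ≥ 1 be an integer, t > 0, M ≥ 1, and b_1,…,b_M > 0 with mean b̄ = (∑_{j=1}^M b_j)/M. Then ∏_{j=1}^M (1 − S_m(b_j t) e^{−b_j t}) ≤ (1 − S_m(b̄ t) e^{−b̄ t})^M. -/
/-- `Sm m y` is the `m`-th partial sum of the exponential series. -/
noncomputable def Sm (m : ℕ) (y : ℝ) : ℝ := ∑ i ∈ Finset.range m, y ^ i / (Nat.factorial i)

/-!
The function `y ↦ 1 - Sm (k + 1) y * exp (-y)` vanishes at `0` and is an antiderivative of the gamma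
density `y ^ k / k! * exp (-y)`, whose logarithmic derivative `k / y - 1` is antitone on `(0, ∞)`.
By Cauchy's mean value theorem, an antiderivative of a log-concave density that vanishes at the left
endpoint is itself log-concave, and Jensen's inequality for its logarithm gives the bound.
-/

open Set
open scoped Finset

section LogConcave

lemma prod_le_pow_card_of_concaveOn_log {E ι : Type*} [AddCommGroup E] [Module ℝ E] {s : Set E}
    {F : E → ℝ} (hF : ConcaveOn ℝ s fun x ↦ Real.log (F x)) (hF_pos : ∀ x ∈ s, 0 < F x)
    {t : Finset ι} {p : ι → E} (hp : ∀ i ∈ t, p i ∈ s) :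
    ∏ i ∈ t, F (p i) ≤ F ((#t : ℝ)⁻¹ • ∑ i ∈ t, p i) ^ #t := by
  rcases t.eq_empty_or_nonempty with rfl | ht
  · simp
  have hcard : (0 : ℝ) < #t := by exact_mod_cast ht.card_pos
  have hw_nonneg : ∀ i ∈ t, (0 : ℝ) ≤ (#t : ℝ)⁻¹ := fun _ _ ↦ by positivity
  have hw_sum : ∑ _i ∈ t, (#t : ℝ)⁻¹ = 1 := by
    rw [Finset.sum_const, nsmul_eq_mul, mul_inv_cancel₀ hcard.ne']
  have mean_mem : (#t : ℝ)⁻¹ • ∑ i ∈ t, p i ∈ s :=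
    Finset.smul_sum (r := (#t : ℝ)⁻¹) (f := p) ▸ hF.1.sum_mem hw_nonneg hw_sum hp
  have jensen := hF.le_map_sum hw_nonneg hw_sum hp
  rw [← Finset.smul_sum, ← Finset.smul_sum, smul_eq_mul, inv_mul_le_iff₀ hcard] at jensen
  rw [← Real.log_le_log_iff (Finset.prod_pos fun i hi ↦ hF_pos _ (hp i hi))
      (pow_pos (hF_pos _ mean_mem) _),
    Real.log_prod fun i hi ↦ (hF_pos _ (hp i hi)).ne', Real.log_pow]
  exact jensen

variable {a : ℝ} {F f r : ℝ → ℝ}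

lemma pos_of_hasDerivAt_pos (hFa : F a = 0) (hF_cont : ContinuousOn F (Ici a))
    (hF : ∀ x ∈ Ioi a, HasDerivAt F (f x) x) (hf_pos : ∀ x ∈ Ioi a, 0 < f x) :
    ∀ x ∈ Ioi a, 0 < F x := by
  intro x hx
  have hF_mono : StrictMonoOn F (Ici a) := by
    refine strictMonoOn_of_deriv_pos (convex_Ici a) hF_cont fun z hz ↦ ?_
    rw [interior_Ici] at hz
    exact (hF z hz).deriv ▸ hf_pos z hz
  exact hFa ▸ hF_mono self_mem_Ici (Ioi_subset_Ici_self hx) hx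

lemma logDeriv_mul_antiderivative_le (hFa : F a = 0) (hF_cont : ContinuousOn F (Ici a))
    (hf_cont : ContinuousOn f (Ici a)) (hF : ∀ x ∈ Ioi a, HasDerivAt F (f x) x)
    (hf : ∀ x ∈ Ioi a, HasDerivAt f (r x * f x) x) (hf_pos : ∀ x ∈ Ioi a, 0 < f x)
    (hr : AntitoneOn r (Ioi a)) {y : ℝ} (hy : y ∈ Ioi a) :
    r y * F y ≤ f y := by
  have hfa : 0 ≤ f a :=
    ge_of_tendsto ((hf_cont a self_mem_Ici).mono Ioi_subset_Ici_self)
      (eventually_mem_nhdsWithin.mono fun x hx ↦ (hf_pos x hx).le)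
  obtain ⟨c, hc, hratio⟩ := exists_ratio_hasDerivAt_eq_ratio_slope F f hy
    (hF_cont.mono Icc_subset_Ici_self) (fun x hx ↦ hF x hx.1)
    f (fun x ↦ r x * f x) (hf_cont.mono Icc_subset_Ici_self) (fun x hx ↦ hf x hx.1)
  have hslope : f y - f a = r c * F y := by
    apply mul_right_cancel₀ (hf_pos c hc.1).ne'
    rw [hratio, hFa]
    ring
  calc r y * F y ≤ r c * F y := by
        gcongr
        · exact (pos_of_hasDerivAt_pos hFa hF_cont hF hf_pos y hy).le
        · exact hr hc.1 hy hc.2.le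
    _ = f y - f a := hslope.symm
    _ ≤ f y := sub_le_self _ hfa

lemma concaveOn_log_antiderivative (hFa : F a = 0) (hF_cont : ContinuousOn F (Ici a))
    (hf_cont : ContinuousOn f (Ici a)) (hF : ∀ x ∈ Ioi a, HasDerivAt F (f x) x)
    (hf : ∀ x ∈ Ioi a, HasDerivAt f (r x * f x) x) (hf_pos : ∀ x ∈ Ioi a, 0 < f x)
    (hr : AntitoneOn r (Ioi a)) :
    ConcaveOn ℝ (Ioi a) fun x ↦ Real.log (F x) := by
  have hF_pos := pos_of_hasDerivAt_pos hFa hF_cont hF hf_pos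
  have hlog : ∀ x ∈ Ioi a, HasDerivAt (fun x ↦ Real.log (F x)) (f x / F x) x :=
    fun x hx ↦ (hF x hx).log (hF_pos x hx).ne'
  have hquot : ∀ x ∈ Ioi a,
      HasDerivAt (fun x ↦ f x / F x) ((r x * f x * F x - f x * f x) / F x ^ 2) x :=
    fun x hx ↦ (hf x hx).div (hF x hx) (hF_pos x hx).ne'
  refine concaveOn_of_hasDerivWithinAt2_nonpos (convex_Ioi a)
    (fun x hx ↦ (hlog x hx).continuousAt.continuousWithinAt)
    (fun x hx ↦ (hlog x (interior_subset hx)).hasDerivWithinAt)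
    (fun x hx ↦ (hquot x (interior_subset hx)).hasDerivWithinAt) fun x hx ↦ ?_
  replace hx : x ∈ Ioi a := interior_subset hx
  have hle : r x * F x ≤ f x :=
    logDeriv_mul_antiderivative_le hFa hF_cont hf_cont hF hf hf_pos hr hx
  refine div_nonpos_of_nonpos_of_nonneg ?_ (sq_nonneg _)
  calc r x * f x * F x - f x * f x = f x * (r x * F x - f x) := by ring
    _ ≤ 0 := mul_nonpos_of_nonneg_of_nonpos (hf_pos x hx).le (sub_nonpos.2 hle)

end LogConcave

section Poisson

/-- For `y ≥ 0`, the probability that a Poisson variable of mean `y` equals `k`; as a function of `y`,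
it is the density of the gamma distribution of shape `k + 1` and rate `1`. It is defined for every
real `y` so that it can be differentiated on all of `ℝ`. -/
noncomputable def poissonWeight (k : ℕ) (y : ℝ) : ℝ :=
  y ^ k / k.factorial * Real.exp (-y)

/-- For `y ≥ 0`, the probability that a Poisson variable of mean `y` is at least `m`; for `m ≥ 1` it
is, as a function of `y`, the distribution function of the gamma distribution of shape `m` and rate
`1`, which is how its log-concavity is obtained. -/
noncomputable def poissonTail (m : ℕ) (y : ℝ) : ℝ :=
  1 - Sm m y * Real.exp (-y)

lemma poissonTail_succ (m : ℕ) (y : ℝ) :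
    poissonTail (m + 1) y = poissonTail m y - poissonWeight m y := by
  simp only [poissonTail, poissonWeight, Sm, Finset.sum_range_succ]
  ring

lemma poissonTail_succ_zero (k : ℕ) : poissonTail (k + 1) 0 = 0 := by
  simp [poissonTail, Sm, Finset.sum_range_succ']

lemma poissonWeight_pos (k : ℕ) {y : ℝ} (hy : 0 < y) : 0 < poissonWeight k y := by
  unfold poissonWeight
  positivity

lemma continuous_poissonWeight (k : ℕ) : Continuous (poissonWeight k) := by
  unfold poissonWeight
  fun_prop

lemma hasDerivAt_poissonWeight_zero (y : ℝ) :
    HasDerivAt (poissonWeight 0) (-poissonWeight 0 y) y := by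
  have h : poissonWeight 0 = fun x ↦ Real.exp (-x) := by
    ext x
    simp [poissonWeight]
  simpa [h] using (hasDerivAt_neg y).exp

lemma hasDerivAt_poissonWeight_succ (k : ℕ) (y : ℝ) :
    HasDerivAt (poissonWeight (k + 1)) (poissonWeight k y - poissonWeight (k + 1) y) y := by
  have h := ((hasDerivAt_pow (k + 1) y).div_const ((k + 1).factorial : ℝ)).mul
    (hasDerivAt_neg y).exp
  refine h.congr_deriv ?_
  simp only [poissonWeight, Nat.factorial_succ, Nat.add_sub_cancel]
  push_cast
  field_simp
  ring

lemma hasDerivAt_poissonWeight (k : ℕ) {y : ℝ} (hy : y ≠ 0) :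
    HasDerivAt (poissonWeight k) ((k / y - 1) * poissonWeight k y) y := by
  cases k with
  | zero => simpa using hasDerivAt_poissonWeight_zero y
  | succ k =>
    refine (hasDerivAt_poissonWeight_succ k y).congr_deriv ?_
    simp only [poissonWeight, Nat.factorial_succ]
    push_cast
    field_simp
    ring

lemma hasDerivAt_poissonTail_succ (k : ℕ) (y : ℝ) :
    HasDerivAt (poissonTail (k + 1)) (poissonWeight k y) y := by
  induction k with
  | zero =>
    have h : poissonTail 1 = fun x ↦ 1 - poissonWeight 0 x := by
      ext x
      simp [poissonTail, poissonWeight, Sm]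
    rw [h]
    simpa using (hasDerivAt_poissonWeight_zero y).const_sub 1
  | succ k ih =>
    rw [funext (poissonTail_succ (k + 1))]
    simpa using ih.fun_sub (hasDerivAt_poissonWeight_succ k y)

lemma continuous_poissonTail_succ (k : ℕ) : Continuous (poissonTail (k + 1)) :=
  continuous_iff_continuousAt.2 fun y ↦ (hasDerivAt_poissonTail_succ k y).continuousAt

lemma poissonTail_succ_pos (k : ℕ) : ∀ y ∈ Ioi 0, 0 < poissonTail (k + 1) y :=
  pos_of_hasDerivAt_pos (poissonTail_succ_zero k) (continuous_poissonTail_succ k).continuousOn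
    (fun y _ ↦ hasDerivAt_poissonTail_succ k y) fun _ hy ↦ poissonWeight_pos k hy

lemma concaveOn_log_poissonTail_succ (k : ℕ) :
    ConcaveOn ℝ (Ioi 0) fun y ↦ Real.log (poissonTail (k + 1) y) := by
  have antitone_logDeriv : AntitoneOn (fun y : ℝ ↦ k / y - 1) (Ioi 0) := by
    intro x (hx : 0 < x) y _ hxy
    dsimp only
    gcongr
  exact concaveOn_log_antiderivative (poissonTail_succ_zero k)
    (continuous_poissonTail_succ k).continuousOn (continuous_poissonWeight k).continuousOn
    (fun y _ ↦ hasDerivAt_poissonTail_succ k y)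
    (fun _ hy ↦ hasDerivAt_poissonWeight k (ne_of_gt hy))
    (fun _ hy ↦ poissonWeight_pos k hy) antitone_logDeriv

end Poisson

theorem prod_le_pow_mean
    (m M : ℕ) (hm : 1 ≤ m) (hM : 1 ≤ M) (t : ℝ) (ht : 0 < t)
    (b : ℕ → ℝ) (hb : ∀ j, 1 ≤ j → 0 < b j) :
    ∏ j ∈ Finset.Icc 1 M, (1 - Sm m (b j * t) * Real.exp (-(b j * t)))
      ≤ (1 - Sm m (((∑ j ∈ Finset.Icc 1 M, b j) / M) * t) *
          Real.exp (-(((∑ j ∈ Finset.Icc 1 M, b j) / M) * t))) ^ M := by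
  obtain ⟨k, rfl⟩ := Nat.exists_eq_add_of_le' hm
  have hbt : ∀ j ∈ Finset.Icc 1 M, b j * t ∈ Ioi 0 :=
    fun j hj ↦ mul_pos (hb j (Finset.mem_Icc.1 hj).1) ht
  have mean_eq : (#(Finset.Icc 1 M) : ℝ)⁻¹ • ∑ j ∈ Finset.Icc 1 M, b j * t =
      (∑ j ∈ Finset.Icc 1 M, b j) / M * t := by
    rw [Nat.card_Icc, Nat.add_sub_cancel, ← Finset.sum_mul, smul_eq_mul]
    ring
  have key := prod_le_pow_card_of_concaveOn_log (concaveOn_log_poissonTail_succ k)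
    (poissonTail_succ_pos k) hbt
  rwa [mean_eq, Nat.card_Icc, Nat.add_sub_cancel] at key
end

section
/- (Zipf case of L₁.) Let m ≥ 1 be an integer and p > 0. Then ∫_0^∞ [1 − ∏_{j=1}^M (1 − S_m(j^{−p} u) e^{−j^{−p} u})] du ∼ M^p ln M as M → ∞. -/
/-!
If `X_1, X_2, …` are independent with common tail `P(X_j > y) = g y` for `y ≥ 0`, the integral is
the expectation of the maximum of `j ^ p * X_j` over `j ≤ M`. The only property of
`g y = S_m(y) e^{-y}` that matters is `log (g y) ∼ -y` as `y → ∞`. Substitute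
`u = M ^ p * log M * t`: every factor with `j ≤ M` is then evaluated at an argument at least
`t * log M`, with near equality for `j` close to `M`. Hence the sum of `g` over the factors has
order `M ^ (1 - t + o(1))`, so the integrand tends to `1` for `t < 1` and to `0` for `t > 1`.
It is dominated by `exp (1 - t / 2)`, and the integral divided by `M ^ p * log M` converges to the
length of `(0, 1]`.
-/

open MeasureTheory Filter

open Set Topology

lemma one_sub_prod_one_sub_le_sum {ι R : Type*} [CommRing R] [LinearOrder R]
    [IsStrictOrderedRing R] {s : Finset ι} {f : ι → R}
    (h0 : ∀ i ∈ s, 0 ≤ f i) (h1 : ∀ i ∈ s, f i ≤ 1) :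
    1 - ∏ i ∈ s, (1 - f i) ≤ ∑ i ∈ s, f i := by
  classical
  induction s using Finset.induction_on with
  | empty => simp
  | insert a s ha ih =>
    rw [Finset.forall_mem_insert] at h0 h1
    have hprod : ∏ i ∈ s, (1 - f i) ≤ 1 :=
      Finset.prod_le_one (fun i hi => sub_nonneg.2 (h1.2 i hi))
        fun i hi => sub_le_self 1 (h0.2 i hi)
    rw [Finset.prod_insert ha, Finset.sum_insert ha]
    linarith [ih h0.2 h1.2, mul_le_of_le_one_right h0.1 hprod]

lemma prod_one_sub_le_exp_neg_sum {ι : Type*} {s : Finset ι} {f : ι → ℝ}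
    (h1 : ∀ i ∈ s, f i ≤ 1) :
    ∏ i ∈ s, (1 - f i) ≤ Real.exp (-∑ i ∈ s, f i) := by
  rw [← Finset.sum_neg_distrib, Real.exp_sum]
  exact Finset.prod_le_prod (fun i hi => sub_nonneg.2 (h1 i hi))
    fun i _ => Real.one_sub_le_exp_neg (f i)

lemma tendsto_log_natCast_atTop : Tendsto (fun M : ℕ => Real.log M) atTop atTop :=
  Real.tendsto_log_atTop.comp tendsto_natCast_atTop_atTop

lemma natCast_mul_exp_neg_mul_log {M : ℕ} (hM : M ≠ 0) (a : ℝ) :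
    M * Real.exp (-(a * Real.log M)) = Real.exp (Real.log M * (1 - a)) := by
  rw [mul_one_sub, sub_eq_add_neg, Real.exp_add, Real.exp_log (by positivity), mul_comm a]

lemma le_rpow_neg_mul_rpow_mul {p j M x : ℝ} (hp : 0 ≤ p) (hj : 0 < j) (hjM : j ≤ M)
    (hx : 0 ≤ x) : x ≤ j ^ (-p) * (M ^ p * x) := by
  have hone : 1 ≤ j ^ (-p) * M ^ p := by
    rw [Real.rpow_neg hj.le, ← div_eq_inv_mul, one_le_div (by positivity)]
    exact Real.rpow_le_rpow hj.le hjM hp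
  rw [← mul_assoc]
  exact le_mul_of_one_le_left hx hone

lemma rpow_neg_mul_rpow_mul_le {p θ j M x : ℝ} (hp : 0 ≤ p) (hθ : 0 < θ) (hM : 0 < M)
    (hj : θ * M ≤ j) (hx : 0 ≤ x) : j ^ (-p) * (M ^ p * x) ≤ θ ^ (-p) * x :=
  calc j ^ (-p) * (M ^ p * x) ≤ (θ * M) ^ (-p) * (M ^ p * x) := by
        gcongr ?_ * _
        exact Real.rpow_le_rpow_of_nonpos (by positivity) hj (neg_nonpos.2 hp)
    _ = θ ^ (-p) * x := by
        rw [Real.mul_rpow hθ.le hM.le, Real.rpow_neg hM.le]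
        field_simp

lemma exists_inv_mul_rpow_neg_mul_lt_one (p : ℝ) {t : ℝ} (ht : t < 1) :
    ∃ θ ∈ Ioo (0 : ℝ) 1, θ⁻¹ * θ ^ (-p) * t < 1 := by
  have hcont : ContinuousAt (fun θ : ℝ => θ⁻¹ * θ ^ (-p) * t) 1 := by
    fun_prop (disch := norm_num)
  have hlt : ∀ᶠ θ in 𝓝[<] (1 : ℝ), θ⁻¹ * θ ^ (-p) * t < 1 :=
    (hcont.tendsto.mono_left nhdsWithin_le_nhds).eventually_lt_const (by simpa using ht)
  have hIoo : ∀ᶠ θ in 𝓝[<] (1 : ℝ), θ ∈ Ioo (0 : ℝ) 1 := Ioo_mem_nhdsLT one_pos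
  exact (hIoo.and hlt).exists

/-- The tail at `u` of the maximum of `j ^ p * X_j` over `1 ≤ j ≤ M`, for independent random
variables `X_j` with common tail function `g`. -/
noncomputable def zipfMaxTail (g : ℝ → ℝ) (p : ℝ) (M : ℕ) (u : ℝ) : ℝ :=
  1 - ∏ j ∈ Finset.Icc 1 M, (1 - g ((j : ℝ) ^ (-p) * u))

section Tail

variable {g : ℝ → ℝ} {p : ℝ}

lemma measurable_zipfMaxTail (hg : Measurable g) (M : ℕ) : Measurable (zipfMaxTail g p M) := by
  unfold zipfMaxTail
  fun_prop

lemma zipfMaxTail_nonneg (hg : ∀ y, 0 ≤ y → g y ∈ Icc 0 1) (M : ℕ) {u : ℝ} (hu : 0 ≤ u) :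
    0 ≤ zipfMaxTail g p M u :=
  sub_nonneg.2 <| Finset.prod_le_one (fun _ _ => sub_nonneg.2 (hg _ (by positivity)).2)
    fun _ _ => sub_le_self 1 (hg _ (by positivity)).1

lemma zipfMaxTail_le_one (hg : ∀ y, 0 ≤ y → g y ≤ 1) (M : ℕ) {u : ℝ} (hu : 0 ≤ u) :
    zipfMaxTail g p M u ≤ 1 :=
  sub_le_self 1 <| Finset.prod_nonneg fun _ _ => sub_nonneg.2 (hg _ (by positivity))

lemma zipfMaxTail_le_mul_exp (hg : ∀ y, 0 ≤ y → g y ∈ Icc 0 1) (hp : 0 ≤ p) {k x : ℝ}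
    (hk : 0 ≤ k) (hx : 0 ≤ x) (hgk : ∀ y, x ≤ y → g y ≤ Real.exp (-(k * y))) (M : ℕ) :
    zipfMaxTail g p M ((M : ℝ) ^ p * x) ≤ M * Real.exp (-(k * x)) := by
  have hterm : ∀ j ∈ Finset.Icc 1 M,
      g ((j : ℝ) ^ (-p) * ((M : ℝ) ^ p * x)) ≤ Real.exp (-(k * x)) := by
    intro j hj
    obtain ⟨hj1, hjM⟩ := Finset.mem_Icc.1 hj
    have harg := le_rpow_neg_mul_rpow_mul hp (Nat.cast_pos.2 hj1) (Nat.cast_le.2 hjM) hx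
    refine (hgk _ harg).trans ?_
    gcongr
  calc zipfMaxTail g p M ((M : ℝ) ^ p * x)
      ≤ ∑ j ∈ Finset.Icc 1 M, g ((j : ℝ) ^ (-p) * ((M : ℝ) ^ p * x)) :=
        one_sub_prod_one_sub_le_sum (fun _ _ => (hg _ (by positivity)).1)
          fun _ _ => (hg _ (by positivity)).2
    _ ≤ M * Real.exp (-(k * x)) := by
        simpa using Finset.sum_le_card_nsmul _ _ _ hterm

lemma mul_exp_le_sum_rpow_neg (hg : ∀ y, 0 ≤ y → 0 ≤ g y) (hp : 0 ≤ p) {b θ x : ℝ}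
    (hb : 0 ≤ b) (hθ : θ ∈ Ioo 0 1) (hx : 0 ≤ x)
    (hgb : ∀ y, x ≤ y → Real.exp (-(b * y)) ≤ g y) (M : ℕ) :
    (1 - θ) * M * Real.exp (-(b * (θ ^ (-p) * x))) ≤
      ∑ j ∈ Finset.Icc 1 M, g ((j : ℝ) ^ (-p) * ((M : ℝ) ^ p * x)) := by
  have hfloor : ⌊θ * M⌋₊ ≤ M :=
    Nat.floor_le_of_le (mul_le_of_le_one_left M.cast_nonneg hθ.2.le)
  have hsub : Finset.Ioc ⌊θ * M⌋₊ M ⊆ Finset.Icc 1 M := fun j hj => by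
    rw [Finset.mem_Ioc] at hj
    exact Finset.mem_Icc.2 ⟨Nat.one_le_of_lt hj.1, hj.2⟩
  have hcard : (1 - θ) * M ≤ (Finset.Ioc ⌊θ * M⌋₊ M).card := by
    rw [Nat.card_Ioc, Nat.cast_sub hfloor]
    linarith [Nat.floor_le (mul_nonneg hθ.1.le M.cast_nonneg)]
  have hterm : ∀ j ∈ Finset.Ioc ⌊θ * M⌋₊ M,
      Real.exp (-(b * (θ ^ (-p) * x))) ≤ g ((j : ℝ) ^ (-p) * ((M : ℝ) ^ p * x)) := by
    intro j hj
    obtain ⟨hθj, hjM⟩ := Finset.mem_Ioc.1 hj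
    have hj0 : 0 < j := pos_of_gt hθj
    have hM0 : (0 : ℝ) < M := Nat.cast_pos.2 (hj0.trans_le hjM)
    have hlower := le_rpow_neg_mul_rpow_mul hp (Nat.cast_pos.2 hj0) (Nat.cast_le.2 hjM) hx
    have hupper := rpow_neg_mul_rpow_mul_le hp hθ.1 hM0 (Nat.lt_of_floor_lt hθj).le hx
    refine le_trans ?_ (hgb _ hlower)
    gcongr
  calc (1 - θ) * M * Real.exp (-(b * (θ ^ (-p) * x)))
      ≤ (Finset.Ioc ⌊θ * M⌋₊ M).card * Real.exp (-(b * (θ ^ (-p) * x))) := by gcongr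
    _ ≤ ∑ j ∈ Finset.Ioc ⌊θ * M⌋₊ M, g ((j : ℝ) ^ (-p) * ((M : ℝ) ^ p * x)) := by
        simpa only [nsmul_eq_mul] using Finset.card_nsmul_le_sum _ _ _ hterm
    _ ≤ _ := Finset.sum_le_sum_of_subset_of_nonneg hsub fun _ _ _ => hg _ (by positivity)

lemma one_sub_exp_le_zipfMaxTail (hg : ∀ y, 0 ≤ y → g y ∈ Icc 0 1) (hp : 0 ≤ p) {b θ x : ℝ}
    (hb : 0 ≤ b) (hθ : θ ∈ Ioo 0 1) (hx : 0 ≤ x)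
    (hgb : ∀ y, x ≤ y → Real.exp (-(b * y)) ≤ g y) (M : ℕ) :
    1 - Real.exp (-((1 - θ) * M * Real.exp (-(b * (θ ^ (-p) * x))))) ≤
      zipfMaxTail g p M ((M : ℝ) ^ p * x) := by
  refine sub_le_sub_left ((prod_one_sub_le_exp_neg_sum
    fun _ _ => (hg _ (by positivity)).2).trans ?_) 1
  gcongr
  exact mul_exp_le_sum_rpow_neg (fun y hy => (hg y hy).1) hp hb hθ hx hgb M

lemma eventually_le_exp_neg_mul (hlog : Tendsto (fun y => Real.log (g y) / y) atTop (𝓝 (-1)))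
    {k : ℝ} (hk : k < 1) : ∀ᶠ y in atTop, g y ≤ Real.exp (-(k * y)) := by
  filter_upwards [hlog.eventually_lt_const (neg_lt_neg hk), eventually_gt_atTop 0]
    with y hy hy0
  rw [div_lt_iff₀ hy0, neg_mul] at hy
  exact (Real.le_exp_log _).trans (Real.exp_le_exp.2 hy.le)

lemma eventually_exp_neg_mul_le (hg : ∀ y, 0 ≤ y → 0 ≤ g y)
    (hlog : Tendsto (fun y => Real.log (g y) / y) atTop (𝓝 (-1)))
    {b : ℝ} (hb : 1 < b) : ∀ᶠ y in atTop, Real.exp (-(b * y)) ≤ g y := by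
  filter_upwards [hlog.eventually_const_lt (neg_lt_neg hb),
    hlog.eventually_lt_const (neg_one_lt_zero), eventually_gt_atTop 0] with y hy hneg hy0
  have hgne : g y ≠ 0 := fun h => by simp [h] at hneg
  have hgpos : 0 < g y := (hg y hy0.le).lt_of_ne' hgne
  rw [lt_div_iff₀ hy0, neg_mul] at hy
  exact ((Real.lt_log_iff_exp_lt hgpos).1 hy).le

lemma eventually_zipfMaxTail_le_exp (hg : ∀ y, 0 ≤ y → g y ∈ Icc 0 1)
    (hlog : Tendsto (fun y => Real.log (g y) / y) atTop (𝓝 (-1))) (hp : 0 ≤ p)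
    {k t₀ : ℝ} (hk0 : 0 ≤ k) (hk : k < 1) (ht₀ : 0 < t₀) :
    ∀ᶠ M : ℕ in atTop, ∀ t, t₀ ≤ t →
      zipfMaxTail g p M ((M : ℝ) ^ p * Real.log M * t) ≤
        Real.exp (Real.log M * (1 - k * t)) := by
  have hlarge : Tendsto (fun M : ℕ => Real.log M * t₀) atTop atTop :=
    tendsto_log_natCast_atTop.atTop_mul_const ht₀
  filter_upwards [hlarge.eventually_forall_ge_atTop (eventually_le_exp_neg_mul hlog hk),
    eventually_ne_atTop 0] with M hM hM0 t ht
  have ht0 : 0 ≤ t := ht₀.le.trans ht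
  have hle : Real.log M * t₀ ≤ Real.log M * t := by gcongr
  rw [mul_assoc, ← natCast_mul_exp_neg_mul_log hM0, mul_right_comm k, mul_assoc k]
  exact zipfMaxTail_le_mul_exp hg hp hk0 (by positivity) (fun y hy => hM y (hle.trans hy)) M

lemma tendsto_zipfMaxTail_of_one_lt (hg : ∀ y, 0 ≤ y → g y ∈ Icc 0 1)
    (hlog : Tendsto (fun y => Real.log (g y) / y) atTop (𝓝 (-1))) (hp : 0 ≤ p)
    {t : ℝ} (ht : 1 < t) :
    Tendsto (fun M : ℕ => zipfMaxTail g p M ((M : ℝ) ^ p * Real.log M * t)) atTop (𝓝 0) := by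
  have ht0 : 0 < t := one_pos.trans ht
  obtain ⟨k, hkt, hk1⟩ := exists_between (inv_lt_one_of_one_lt₀ ht)
  have hk0 : 0 < k := (inv_pos.2 ht0).trans hkt
  have hexponent : 1 - k * t < 0 := sub_neg.2 ((inv_lt_iff_one_lt_mul₀ ht0).1 hkt)
  have hbound : Tendsto (fun M : ℕ => Real.exp (Real.log M * (1 - k * t))) atTop (𝓝 0) :=
    Real.tendsto_exp_atBot.comp (tendsto_log_natCast_atTop.atTop_mul_const_of_neg hexponent)
  refine squeeze_zero' (.of_forall fun M => zipfMaxTail_nonneg hg M ?_) ?_ hbound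
  · positivity
  · filter_upwards [eventually_zipfMaxTail_le_exp hg hlog hp hk0.le hk1 ht0] with M hM
    exact hM t le_rfl

lemma tendsto_zipfMaxTail_of_lt_one (hg : ∀ y, 0 ≤ y → g y ∈ Icc 0 1)
    (hlog : Tendsto (fun y => Real.log (g y) / y) atTop (𝓝 (-1))) (hp : 0 ≤ p)
    {t : ℝ} (ht0 : 0 < t) (ht : t < 1) :
    Tendsto (fun M : ℕ => zipfMaxTail g p M ((M : ℝ) ^ p * Real.log M * t)) atTop (𝓝 1) := by
  obtain ⟨θ, hθ, hθt⟩ := exists_inv_mul_rpow_neg_mul_lt_one p ht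
  have hlarge : Tendsto (fun M : ℕ => Real.log M * t) atTop atTop :=
    tendsto_log_natCast_atTop.atTop_mul_const ht0
  have hsum : Tendsto (fun M : ℕ =>
      (1 - θ) * Real.exp (Real.log M * (1 - θ⁻¹ * θ ^ (-p) * t))) atTop atTop :=
    (Real.tendsto_exp_atTop.comp (tendsto_log_natCast_atTop.atTop_mul_const
      (sub_pos.2 hθt))).const_mul_atTop (sub_pos.2 hθ.2)
  have hbound := (Real.tendsto_exp_neg_atTop_nhds_zero.comp hsum).const_sub 1
  rw [sub_zero] at hbound
  refine tendsto_of_tendsto_of_tendsto_of_le_of_le' hbound tendsto_const_nhds ?_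
    (.of_forall fun M => zipfMaxTail_le_one (fun y hy => (hg y hy).2) M ?_)
  · filter_upwards [hlarge.eventually_forall_ge_atTop (eventually_exp_neg_mul_le
      (fun y hy => (hg y hy).1) hlog ((one_lt_inv₀ hθ.1).2 hθ.2)),
      eventually_ne_atTop 0] with M hM hM0
    have hle := one_sub_exp_le_zipfMaxTail hg hp (inv_nonneg.2 hθ.1.le) hθ (by positivity) hM M
    have hexponent : θ⁻¹ * (θ ^ (-p) * (Real.log M * t)) =
        θ⁻¹ * θ ^ (-p) * t * Real.log M := by ring
    rwa [hexponent, mul_assoc (1 - θ), natCast_mul_exp_neg_mul_log hM0, ← mul_assoc] at hle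
  · positivity

lemma eventually_zipfMaxTail_le_exp_one_sub_half (hg : ∀ y, 0 ≤ y → g y ∈ Icc 0 1)
    (hlog : Tendsto (fun y => Real.log (g y) / y) atTop (𝓝 (-1))) (hp : 0 ≤ p) :
    ∀ᶠ M : ℕ in atTop, ∀ t, 0 ≤ t →
      zipfMaxTail g p M ((M : ℝ) ^ p * Real.log M * t) ≤ Real.exp (1 - 1 / 2 * t) := by
  filter_upwards [eventually_zipfMaxTail_le_exp hg hlog hp one_half_pos.le one_half_lt_one
    two_pos, tendsto_log_natCast_atTop.eventually_ge_atTop 1] with M hM hM1 t ht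
  rcases le_total t 2 with ht2 | ht2
  · calc zipfMaxTail g p M ((M : ℝ) ^ p * Real.log M * t)
        ≤ 1 := zipfMaxTail_le_one (fun y hy => (hg y hy).2) M (by positivity)
      _ ≤ Real.exp (1 - 1 / 2 * t) := Real.one_le_exp (by linarith)
  · refine (hM t ht2).trans (Real.exp_le_exp.2 ?_)
    exact mul_le_of_one_le_left (by linarith) hM1

lemma tendsto_integral_zipfMaxTail_rescaled (hmeas : Measurable g)
    (hg : ∀ y, 0 ≤ y → g y ∈ Icc 0 1)
    (hlog : Tendsto (fun y => Real.log (g y) / y) atTop (𝓝 (-1))) (hp : 0 ≤ p) :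
    Tendsto (fun M : ℕ =>
        ∫ t in Ioi (0 : ℝ), zipfMaxTail g p M ((M : ℝ) ^ p * Real.log M * t))
      atTop (𝓝 1) := by
  have hlimit : ∫ t in Ioi (0 : ℝ), (Ioc 0 1).indicator (1 : ℝ → ℝ) t = 1 := by
    rw [setIntegral_indicator measurableSet_Ioc, inter_eq_right.2 Ioc_subset_Ioi_self]
    simp
  rw [← hlimit]
  refine tendsto_integral_filter_of_dominated_convergence (fun t => Real.exp (1 - 1 / 2 * t))
    (.of_forall fun M => ((measurable_zipfMaxTail hmeas M).comp
      (measurable_const_mul _)).aestronglyMeasurable) ?_ ?_ ?_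
  · filter_upwards [eventually_zipfMaxTail_le_exp_one_sub_half hg hlog hp] with M hM
    filter_upwards [ae_restrict_mem measurableSet_Ioi] with t ht
    have ht0 : 0 ≤ t := (mem_Ioi.1 ht).le
    rw [Real.norm_of_nonneg (zipfMaxTail_nonneg hg M (by positivity))]
    exact hM t ht0
  · simpa only [← Real.exp_add, ← sub_eq_add_neg, neg_mul] using
      (exp_neg_integrableOn_Ioi 0 one_half_pos).const_mul (Real.exp 1)
  · filter_upwards [ae_restrict_mem measurableSet_Ioi,
      ae_restrict_of_ae (Measure.ae_ne volume (1 : ℝ))] with t ht ht1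
    rcases ht1.lt_or_gt with hlt | hgt
    · simpa [mem_Ioi.1 ht, hlt.le] using tendsto_zipfMaxTail_of_lt_one hg hlog hp ht hlt
    · simpa [hgt.not_ge] using tendsto_zipfMaxTail_of_one_lt hg hlog hp hgt

theorem zipf_L1_asymp_general (hmeas : Measurable g) (hg : ∀ y, 0 ≤ y → g y ∈ Icc 0 1)
    (hlog : Tendsto (fun y => Real.log (g y) / y) atTop (𝓝 (-1))) (hp : 0 ≤ p) :
    Tendsto (fun M : ℕ =>
        (∫ u in Ioi (0 : ℝ), zipfMaxTail g p M u) / ((M : ℝ) ^ p * Real.log M))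
      atTop (𝓝 1) := by
  refine (tendsto_integral_zipfMaxTail_rescaled hmeas hg hlog hp).congr' ?_
  filter_upwards [eventually_gt_atTop 1] with M hM
  have hlog0 : 0 < Real.log M := Real.log_pos (Nat.one_lt_cast.2 hM)
  rw [integral_comp_mul_left_Ioi _ _ (by positivity), mul_zero, smul_eq_mul, inv_mul_eq_div]

end Tail

section ExponentialSeries

variable {m : ℕ} {y : ℝ}

lemma measurable_Sm_mul_exp_neg (m : ℕ) : Measurable fun y => Sm m y * Real.exp (-y) := by
  unfold Sm
  fun_prop

lemma one_le_Sm (hm : 1 ≤ m) (hy : 0 ≤ y) : 1 ≤ Sm m y := by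
  simpa [Sm] using Finset.single_le_sum (f := fun i => y ^ i / (Nat.factorial i : ℝ))
    (fun i _ => by positivity) (Finset.mem_range.2 hm)

lemma Sm_mul_exp_neg_mem_Icc (m : ℕ) (hy : 0 ≤ y) : Sm m y * Real.exp (-y) ∈ Icc 0 1 := by
  constructor
  · unfold Sm
    positivity
  · rw [Real.exp_neg, ← div_eq_mul_inv, div_le_one (Real.exp_pos y)]
    exact Real.sum_le_exp_of_nonneg hy m

lemma Sm_le_pow_mul_Sm_one (m : ℕ) (hy : 1 ≤ y) : Sm m y ≤ y ^ m * Sm m 1 := by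
  unfold Sm
  rw [Finset.mul_sum]
  refine Finset.sum_le_sum fun i hi => ?_
  rw [one_pow, mul_one_div]
  gcongr
  exact (Finset.mem_range.1 hi).le

lemma tendsto_log_Sm_div (hm : 1 ≤ m) :
    Tendsto (fun y => Real.log (Sm m y) / y) atTop (𝓝 0) := by
  have hlog : Tendsto (fun y : ℝ => m * (Real.log y / y) + Real.log (Sm m 1) / y) atTop (𝓝 0) := by
    simpa using (Real.isLittleO_log_id_atTop.tendsto_div_nhds_zero.const_mul (m : ℝ)).add
      (tendsto_id.const_div_atTop (Real.log (Sm m 1)))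
  refine squeeze_zero' ?_ ?_ hlog <;> filter_upwards [eventually_ge_atTop 1] with y hy
  · have hy0 : 0 ≤ y := zero_le_one.trans hy
    exact div_nonneg (Real.log_nonneg (one_le_Sm hm hy0)) hy0
  · have hSy : 0 < Sm m y := one_pos.trans_le (one_le_Sm hm (zero_le_one.trans hy))
    have hS1 : 0 < Sm m 1 := one_pos.trans_le (one_le_Sm hm zero_le_one)
    rw [← mul_div_assoc, ← add_div]
    gcongr
    calc Real.log (Sm m y) ≤ Real.log (y ^ m * Sm m 1) :=
          Real.log_le_log hSy (Sm_le_pow_mul_Sm_one m hy)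
      _ = m * Real.log y + Real.log (Sm m 1) := by
          rw [Real.log_mul (by positivity) hS1.ne', Real.log_pow]

lemma tendsto_log_Sm_mul_exp_neg_div (hm : 1 ≤ m) :
    Tendsto (fun y => Real.log (Sm m y * Real.exp (-y)) / y) atTop (𝓝 (-1)) := by
  have hsub := (tendsto_log_Sm_div hm).sub_const 1
  rw [zero_sub] at hsub
  refine hsub.congr' ?_
  filter_upwards [eventually_gt_atTop 0] with y hy
  have hS : 0 < Sm m y := one_pos.trans_le (one_le_Sm hm hy.le)
  rw [Real.log_mul hS.ne' (Real.exp_ne_zero _), Real.log_exp]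
  field_simp
  ring

end ExponentialSeries

theorem zipf_L1_asymp (m : ℕ) (hm : 1 ≤ m) (p : ℝ) (hp : 0 < p) :
    Tendsto (fun M : ℕ =>
        (∫ u in Set.Ioi (0 : ℝ),
            (1 - ∏ j ∈ Finset.Icc 1 M,
              (1 - Sm m ((j : ℝ) ^ (-p) * u) * Real.exp (-((j : ℝ) ^ (-p) * u))))) /
          ((M : ℝ) ^ p * Real.log M))
      atTop (nhds 1) :=
  zipf_L1_asymp_general (g := fun y => Sm m y * Real.exp (-y)) (measurable_Sm_mul_exp_neg m)
    (fun _ => Sm_mul_exp_neg_mem_Icc m) (tendsto_log_Sm_mul_exp_neg_div hm) hp.le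
end
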